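/- Let (J,Q,1) be a weak quadratic Jordan algebra over a field k, let x ∈ J be invertible and a ∈ J. Then Q_x^{-1} V_{a,x} = V_{x,a} Q_x^{-1} = Q_{a,x^{-1}} as endomorphisms of J. -/

import Mathlib

/-!
Write `y = x⁻¹`, so `Q_x y = x`. By (QJ2), `V_{x,a} Q_x = Q_x V_{a,x}` (as Mathlib products), which is
the first equality after multiplying by `Q_x⁻¹` on both sides.
For the second, (QJ2) and the symmetry of `Q_{a,b}` in `a, b` give `V_{x,a} Q_x = Q_{x, Q_x a}`
(`V_mul_Q_eq_Qbil`), while the polarization of (QJ3) in `b` gives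
`Q_{x, Q_x a} = Q_{Q_x y, Q_x a} = Q_x Q_{y,a} Q_x` (`Qbil_Q_Q`). Cancelling the factor `Q_x` that
is applied first yields `V_{x,a} = Q_x Q_{a,y}`. Only the second argument of (QJ3) is polarized, so
no scalar extension is needed.
-/

/-- A weak quadratic Jordan algebra `(J, Q, 1)` over a field `k`.
Endomorphisms act on the right: `x·Q_a` is `Q a x`; a paper product `A B`
(apply `A`, then `B`) corresponds to the Mathlib product `B * A`. -/
structure WeakQuadraticJordan (k J : Type*) [Field k] [AddCommGroup J]
    [Module k J] where
  Q : J → Module.End k J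
  one : J
  one_ne_zero : one ≠ 0
  Q_smul : ∀ (t : k) (a : J), Q (t • a) = (t ^ 2) • Q a
  Qbil : J →ₗ[k] J →ₗ[k] Module.End k J
  Qbil_apply : ∀ a b : J, Qbil a b = Q (a + b) - Q a - Q b
  QJ1 : Q one = 1
  QJ2 : ∀ a b x : J, Qbil a (Q a x) b = Q a (Qbil b x a)
  QJ3 : ∀ a b : J, Q (Q a b) = Q a * Q b * Q a

namespace WeakQuadraticJordan

variable {k J : Type*} [Field k] [AddCommGroup J] [Module k J]

/-- `V W a b` is the endomorphism `V_{a,b} : x ↦ b·Q_{a,x}`. -/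
def V (W : WeakQuadraticJordan k J) (a b : J) : Module.End k J where
  toFun x := W.Qbil a x b
  map_add' x y := by simp
  map_smul' t x := by simp

/-- `δ` is an `ε`-derivation: `δ(a·Q_b) = ε·δ(a)·Q_b + a·Q_{b,δ(b)}`. -/
def IsEpsDerivation (W : WeakQuadraticJordan k J) (ε : k) (δ : Module.End k J) : Prop :=
  ∀ a b : J, δ (W.Q b a) = ε • W.Q b (δ a) + W.Qbil b (δ b) a

/-- Every nonzero element is invertible (`Q_a` is a unit of `End k J`). -/
def IsDivision (W : WeakQuadraticJordan k J) : Prop :=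
  ∀ a : J, a ≠ 0 → IsUnit (W.Q a)

end WeakQuadraticJordan

namespace WeakQuadraticJordan

variable {k J : Type*} [Field k] [AddCommGroup J] [Module k J]

lemma Qbil_comm (W : WeakQuadraticJordan k J) (a b : J) : W.Qbil a b = W.Qbil b a := by
  rw [W.Qbil_apply, W.Qbil_apply, add_comm a b]
  abel

/-- The polarization of (QJ3) in its second argument. -/
lemma Qbil_Q_Q (W : WeakQuadraticJordan k J) (x b c : J) :
    W.Qbil (W.Q x b) (W.Q x c) = W.Q x * W.Qbil b c * W.Q x := by
  rw [W.Qbil_apply, W.Qbil_apply, ← map_add, W.QJ3, W.QJ3, W.QJ3]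
  simp only [mul_sub, sub_mul]

lemma V_mul_Q (W : WeakQuadraticJordan k J) (x a : J) :
    W.V x a * W.Q x = W.Q x * W.V a x :=
  LinearMap.ext fun y => W.QJ2 x a y

lemma V_mul_Q_eq_Qbil (W : WeakQuadraticJordan k J) (x a : J) :
    W.V x a * W.Q x = W.Qbil x (W.Q x a) := by
  ext y
  change W.Qbil x (W.Q x y) a = W.Qbil x (W.Q x a) y
  rw [W.QJ2, W.QJ2, W.Qbil_comm a y]

end WeakQuadraticJordan

/-- For `x` invertible and `a ∈ J`:
`Q_x⁻¹ V_{a,x} = V_{x,a} Q_x⁻¹ = Q_{a,x⁻¹}`.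
(Paper products `A B` = apply `A` then `B` = Mathlib `B * A`.) -/
theorem Qinv_V_identities {k J : Type*} [Field k] [AddCommGroup J] [Module k J]
    (W : WeakQuadraticJordan k J) (x : J) (hx : IsUnit (W.Q x)) (a : J) :
    W.V a x * (↑hx.unit⁻¹ : Module.End k J)
        = (↑hx.unit⁻¹ : Module.End k J) * W.V x a ∧
      (↑hx.unit⁻¹ : Module.End k J) * W.V x a
        = W.Qbil a ((↑hx.unit⁻¹ : Module.End k J) x) := by
  have hu : (hx.unit : Module.End k J) = W.Q x := rfl
  constructor
  · rw [Units.mul_inv_eq_iff_eq_mul, mul_assoc, Units.eq_inv_mul_iff_mul_eq, hu, W.V_mul_Q]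
  · rw [Units.inv_mul_eq_iff_eq_mul, hu]
    have hy : W.Q x ((↑hx.unit⁻¹ : Module.End k J) x) = x :=
      LinearMap.congr_fun hx.mul_val_inv x
    have h := W.Qbil_Q_Q x ((↑hx.unit⁻¹ : Module.End k J) x) a
    rw [hy, ← W.V_mul_Q_eq_Qbil, W.Qbil_comm _ a] at h
    exact hx.mul_right_cancel h
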